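/- arXiv:1510.08313 — 2 statements merged into one kernel-verified Lean document; each statement's English description precedes it below -/
import Mathlib

section
/- Fix an integer n ≥ 1, a ∈ (0,1), a point x ∈ ℝ^n and t > 0. For p > 2 let h_p(x,t) = g_p(|x|,t) − g_p(ϱ₀(p),t) denote the barrier with parameters depending on p. Then h_p(x,t) tends to exp(−(|x|² − 1)/(4t)) − exp(−1/(4t)) as p → 2⁺. -/
open Real Filter Set

noncomputable def spatialGrad {n : ℕ} (u : EuclideanSpace ℝ (Fin n) → ℝ → ℝ)
    (x : EuclideanSpace ℝ (Fin n)) (t : ℝ) : EuclideanSpace ℝ (Fin n) :=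
  gradient (fun y => u y t) x

noncomputable def pFlux (p : ℝ) {n : ℕ} (u : EuclideanSpace ℝ (Fin n) → ℝ → ℝ)
    (x : EuclideanSpace ℝ (Fin n)) (t : ℝ) : EuclideanSpace ℝ (Fin n) :=
  ‖spatialGrad u x t‖ ^ (p - 2) • spatialGrad u x t

/-- The `p`-Laplacian in space: the divergence (trace of the spatial Fréchet derivative)
of the vector field `y ↦ |∇u(y,t)|^(p-2) ∇u(y,t)`. -/
noncomputable def pLaplacian (p : ℝ) {n : ℕ} (u : EuclideanSpace ℝ (Fin n) → ℝ → ℝ)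
    (x : EuclideanSpace ℝ (Fin n)) (t : ℝ) : ℝ :=
  LinearMap.trace ℝ (EuclideanSpace ℝ (Fin n))
    (fderiv ℝ (fun y => pFlux p u y t) x).toLinearMap

/-- `u` satisfies the `p`-parabolic equation classically at `(x,t)`. -/
def IsClassicalPParabolicAt (p : ℝ) {n : ℕ} (u : EuclideanSpace ℝ (Fin n) → ℝ → ℝ)
    (x : EuclideanSpace ℝ (Fin n)) (t : ℝ) : Prop :=
  DifferentiableAt ℝ (fun s => u x s) t ∧
  DifferentiableAt ℝ (fun y => u y t) x ∧
  DifferentiableAt ℝ (fun y => pFlux p u y t) x ∧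
  deriv (fun s => u x s) t = pLaplacian p u x t

noncomputable def gbar (p r t : ℝ) : ℝ :=
  (max 0 (1 - (p - 2) / p ^ (p / (p - 1)) * ((r ^ (p / (p - 1)) - 1) / t ^ (1 / (p - 1)))))
    ^ ((p - 1) / (p - 2))

noncomputable def hbar (p ϱ : ℝ) {n : ℕ} (x : EuclideanSpace ℝ (Fin n)) (t : ℝ) : ℝ :=
  gbar p ‖x‖ t - gbar p ϱ t

noncomputable def htilde (H T k : ℝ) {n : ℕ} (x : EuclideanSpace ℝ (Fin n)) (t : ℝ) : ℝ :=
  H * Real.exp 2 * (1 - Real.exp ((t - T) / T - (‖x‖ - 1) / k))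

/-! The barrier is a difference of two powers `(1 + u)₊ ^ q` with `u → 0` and `q * u` convergent,
and such a power tends to `exp (lim (q * u))`. In `g_p` the factor `p - 2` of `u` cancels against
the denominator of `q = (p - 1) / (p - 2)`. In the second term, the `min` in the radius equals `2`
for `p` close to `2`, so the radius tends to `√2` and `(√2)² - 1 = 1`. -/

open Asymptotics Topology

lemma isEquivalent_log_one_add : (fun u : ℝ => log (1 + u)) ~[𝓝 0] fun u => u := by
  simpa [IsEquivalent, Pi.sub_def] using
    hasDerivAt_iff_isLittleO_nhds_zero.mp (hasDerivAt_log one_ne_zero)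

section PowerLimit

variable {α : Type*} {l : Filter α} {u q : α → ℝ} {L : ℝ}

lemma tendsto_mul_log_one_add (hu : Tendsto u l (𝓝 0))
    (hqu : Tendsto (fun i => q i * u i) l (𝓝 L)) :
    Tendsto (fun i => q i * log (1 + u i)) l (𝓝 L) :=
  (IsEquivalent.refl.mul (isEquivalent_log_one_add.comp_tendsto hu)).symm.tendsto_nhds hqu

lemma tendsto_max_zero_one_add_rpow_exp (hu : Tendsto u l (𝓝 0))
    (hqu : Tendsto (fun i => q i * u i) l (𝓝 L)) :
    Tendsto (fun i => max 0 (1 + u i) ^ q i) l (𝓝 (exp L)) := by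
  have base_pos : ∀ᶠ i in l, 0 < 1 + u i := by
    filter_upwards [hu.eventually_const_lt neg_one_lt_zero] with i hi
    linarith
  refine ((continuous_exp.tendsto L).comp (tendsto_mul_log_one_add hu hqu)).congr' ?_
  filter_upwards [base_pos] with i hi
  rw [max_eq_right hi.le, rpow_def_of_pos hi, mul_comm, Function.comp_apply]

end PowerLimit

lemma tendsto_max_zero_one_sub_mul_rpow_exp {c : ℝ → ℝ} {C : ℝ}
    (hc : Tendsto c (𝓝[>] 2) (𝓝 C)) :
    Tendsto (fun p => max 0 (1 - (p - 2) * c p) ^ ((p - 1) / (p - 2))) (𝓝[>] 2)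
      (𝓝 (exp (-C))) := by
  have hp : Tendsto (fun p : ℝ => p) (𝓝[>] 2) (𝓝 2) := nhdsWithin_le_nhds
  have base : Tendsto (fun p => -((p - 2) * c p)) (𝓝[>] 2) (𝓝 0) := by
    simpa using ((hp.sub_const 2).mul hc).neg
  have exponent_mul : Tendsto (fun p => (p - 1) / (p - 2) * -((p - 2) * c p)) (𝓝[>] 2)
      (𝓝 (-C)) := by
    have cancelled : Tendsto (fun p => -((p - 1) * c p)) (𝓝[>] 2) (𝓝 (-C)) := by
      convert! ((hp.sub_const 1).mul hc).neg using 2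
      ring
    refine cancelled.congr' ?_
    filter_upwards [self_mem_nhdsWithin] with p (hp2 : 2 < p)
    have : p - 2 ≠ 0 := (sub_pos.mpr hp2).ne'
    field_simp
  simpa only [← sub_eq_add_neg] using tendsto_max_zero_one_add_rpow_exp base exponent_mul

lemma tendsto_gbar {r : ℝ → ℝ} {R t : ℝ} (ht : 0 < t) (hr : Tendsto r (𝓝[>] 2) (𝓝 R)) :
    Tendsto (fun p => gbar p (r p) t) (𝓝[>] 2) (𝓝 (exp (-((R ^ 2 - 1) / (4 * t))))) := by
  have hp : Tendsto (fun p : ℝ => p) (𝓝[>] 2) (𝓝 2) := nhdsWithin_le_nhds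
  have conjugate : Tendsto (fun p : ℝ => p / (p - 1)) (𝓝[>] 2) (𝓝 2) := by
    convert! hp.div (hp.sub_const 1) (by norm_num) using 2
    norm_num
  have time_exponent : Tendsto (fun p : ℝ => 1 / (p - 1)) (𝓝[>] 2) (𝓝 1) := by
    convert! (tendsto_const_nhds (x := (1 : ℝ))).div (hp.sub_const 1) (by norm_num) using 2
    norm_num
  have space : Tendsto (fun p => r p ^ (p / (p - 1))) (𝓝[>] 2) (𝓝 (R ^ 2)) := by
    simpa only [rpow_two] using hr.rpow conjugate (.inr two_pos)
  have constant : Tendsto (fun p : ℝ => p ^ (p / (p - 1))) (𝓝[>] 2) (𝓝 4) := by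
    convert! hp.rpow conjugate (.inr two_pos) using 2
    norm_num
  have time : Tendsto (fun p : ℝ => t ^ (1 / (p - 1))) (𝓝[>] 2) (𝓝 t) := by
    simpa only [rpow_one] using tendsto_const_nhds.rpow time_exponent (.inr one_pos)
  have coefficient := (space.sub_const 1).div (constant.mul time) (by positivity)
  refine (tendsto_max_zero_one_sub_mul_rpow_exp coefficient).congr fun p => ?_
  rw [gbar, Pi.div_apply, div_mul_div_comm, mul_div_assoc]

lemma tendsto_hbar {n : ℕ} (x : EuclideanSpace ℝ (Fin n)) {ϱ : ℝ → ℝ} {R t : ℝ} (ht : 0 < t)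
    (hϱ : Tendsto ϱ (𝓝[>] 2) (𝓝 R)) :
    Tendsto (fun p => hbar p (ϱ p) x t) (𝓝[>] 2)
      (𝓝 (exp (-((‖x‖ ^ 2 - 1) / (4 * t))) - exp (-((R ^ 2 - 1) / (4 * t))))) :=
  (tendsto_gbar ht tendsto_const_nhds).sub (tendsto_gbar ht hϱ)

/-- The radius `ϱ₀(p)` at which the barrier `h_p` vanishes, with the dimension `n` replaced by a
real parameter `m`. -/
noncomputable def barrierRadius (a m p : ℝ) : ℝ :=
  min (a * p / (m * (p - 2)) + 1) 2 ^ ((p - 1) / p)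

lemma tendsto_mul_div_mul_sub_two_atTop {a m : ℝ} (ha : 0 < a) (hm : 0 < m) :
    Tendsto (fun p => a * p / (m * (p - 2))) (𝓝[>] 2) atTop := by
  have hp : Tendsto (fun p : ℝ => p) (𝓝[>] 2) (𝓝 2) := nhdsWithin_le_nhds
  have denominator : Tendsto (fun p => m * (p - 2)) (𝓝[>] 2) (𝓝[>] 0) := by
    refine tendsto_nhdsWithin_iff.mpr ⟨by simpa using (hp.sub_const 2).const_mul m, ?_⟩
    filter_upwards [self_mem_nhdsWithin] with p hp2
    exact mul_pos hm (sub_pos.mpr hp2)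
  exact (hp.const_mul a).pos_mul_atTop (by positivity) denominator.inv_tendsto_nhdsGT_zero

lemma tendsto_barrierRadius {a m : ℝ} (ha : 0 < a) (hm : 0 < m) :
    Tendsto (barrierRadius a m) (𝓝[>] 2) (𝓝 √2) := by
  have hp : Tendsto (fun p : ℝ => p) (𝓝[>] 2) (𝓝 2) := nhdsWithin_le_nhds
  have exponent : Tendsto (fun p : ℝ => (p - 1) / p) (𝓝[>] 2) (𝓝 (1 / 2)) := by
    convert! (hp.sub_const 1).div hp two_ne_zero using 2
    norm_num
  rw [sqrt_eq_rpow]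
  refine (tendsto_const_nhds.rpow exponent (.inl two_ne_zero)).congr' ?_
  filter_upwards [(tendsto_mul_div_mul_sub_two_atTop ha hm).eventually_ge_atTop 1] with p hge
  rw [barrierRadius, min_eq_right (by linarith)]

theorem stmt3_general (n : ℕ) (hn : 1 ≤ n) (a : ℝ) (ha : 0 < a)
    (x : EuclideanSpace ℝ (Fin n)) (t : ℝ) (ht : 0 < t) :
    Tendsto (fun p : ℝ => hbar p (min (a * p / (n * (p - 2)) + 1) 2 ^ ((p - 1) / p)) x t)
      (𝓝[>] 2) (𝓝 (exp (-((‖x‖ ^ 2 - 1) / (4 * t))) - exp (-(1 / (4 * t))))) := by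
  have radius : Tendsto (barrierRadius a n) (𝓝[>] 2) (𝓝 √2) :=
    tendsto_barrierRadius ha (Nat.cast_pos.mpr hn)
  have sq_sub_one : √2 ^ 2 - 1 = 1 := by norm_num
  simpa only [sq_sub_one] using! tendsto_hbar x ht radius

/-- `h_p(x,t)` tends to `exp(-(|x|²-1)/(4t)) - exp(-1/(4t))` as `p → 2⁺`. -/
theorem stmt3 (n : ℕ) (hn : 1 ≤ n) (a : ℝ) (ha : a ∈ Set.Ioo (0:ℝ) 1)
    (x : EuclideanSpace ℝ (Fin n)) (t : ℝ) (ht : 0 < t) :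
    Filter.Tendsto
      (fun p : ℝ => hbar p ((min (a * p / ((n : ℝ) * (p - 2)) + 1) 2) ^ ((p - 1) / p)) x t)
      (nhdsWithin 2 (Set.Ioi 2))
      (nhds (Real.exp (-((‖x‖ ^ 2 - 1) / (4 * t))) - Real.exp (-(1 / (4 * t))))) :=
  stmt3_general n hn a ha.1 x t ht
end

section
/- Let p > 2 and let G(x,t) = g(|x|,t) for x ∈ ℝ^n, t > 0. Then at every point (x,t) with x ≠ 0, t > 0 and 1 − ((p−2)/p^{p/(p−1)})·(|x|^{p/(p−1)} − 1)/t^{1/(p−1)} > 0, one has the explicit formulas ∂_t G(x,t) = p^{−p/(p−1)}·((|x|^{p/(p−1)} − 1)/t^{p/(p−1)})·G(x,t)^{1/(p−1)} and Δ_p G(x,t) = (p^{−p/(p−1)}·|x|^{p/(p−1)}/t^{p/(p−1)} − (n/(p t))·G(x,t)^{(p−2)/(p−1)})·G(x,t)^{1/(p−1)}. -/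
open Real Filter Set

/-!
On its positivity set the profile `g` satisfies `∂ᵣg = -(r g / (p t)) ^ (1 / (p - 1))`. Raising this
to the power `p - 1`, the flux `|∇G| ^ (p - 2) ∇G` is the linear transport field `-G x / (p t)`,
whose divergence is `-(n G + r ∂ᵣg) / (p t)`. The exponents of `g` then turn this into the stated
formula, using `p / (p - 1) = 1 + 1 / (p - 1)`.
-/

open scoped Topology

section Divergence

/-- The divergence of a vector field, as the trace of its Fréchet derivative; it is the operator
in which `pLaplacian` is expressed, without a choice of coordinates. -/
noncomputable def divergence {E : Type*} [NormedAddCommGroup E] [NormedSpace ℝ E]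
    (V : E → E) (x : E) : ℝ :=
  LinearMap.trace ℝ E (fderiv ℝ V x).toLinearMap

theorem divergence_smul_self {E : Type*} [NormedAddCommGroup E] [NormedSpace ℝ E]
    [FiniteDimensional ℝ E] {f : E → ℝ} {f' : E →L[ℝ] ℝ} {x : E} (hf : HasFDerivAt f f' x) :
    divergence (fun y => f y • y) x = f' x + Module.finrank ℝ E * f x := by
  have hsmul : HasFDerivAt (fun y => f y • y) _ x := hf.fun_smul (hasFDerivAt_id x)
  have hfderiv : (fderiv ℝ (fun y => f y • y) x).toLinearMap
      = f x • LinearMap.id + (f' : E →ₗ[ℝ] ℝ).smulRight x := by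
    rw [hsmul.fderiv]
    rfl
  rw [divergence, hfderiv, map_add, map_smul, LinearMap.trace_id, LinearMap.trace_smulRight,
    smul_eq_mul, ContinuousLinearMap.coe_coe]
  ring

end Divergence

section Radial

variable {E : Type*} [NormedAddCommGroup E] [InnerProductSpace ℝ E] {x : E}

theorem hasFDerivAt_norm (hx : x ≠ 0) :
    HasFDerivAt (fun y : E => ‖y‖) (‖x‖⁻¹ • innerSL ℝ x) x := by
  have hsqrt := (hasStrictFDerivAt_norm_sq x).hasFDerivAt.sqrt
    (pow_ne_zero 2 (norm_ne_zero_iff.mpr hx))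
  simp only [Real.sqrt_sq (norm_nonneg _)] at hsqrt
  refine hsqrt.congr_fderiv ?_
  rw [← Nat.cast_smul_eq_nsmul ℝ, smul_smul]
  congr 1
  push_cast
  field_simp

theorem hasGradientAt_radial [CompleteSpace E] {φ : ℝ → ℝ} {φ' : ℝ} (hx : x ≠ 0)
    (hφ : HasDerivAt φ φ' ‖x‖) :
    HasGradientAt (fun y => φ ‖y‖) ((φ' / ‖x‖) • x) x := by
  rw [hasGradientAt_iff_hasFDerivAt]
  refine (hφ.comp_hasFDerivAt x (hasFDerivAt_norm hx)).congr_fderiv ?_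
  rw [smul_smul, ← div_eq_mul_inv, map_smul]
  rfl

theorem divergence_radial [FiniteDimensional ℝ E] {W : ℝ → ℝ} {W' : ℝ} (hx : x ≠ 0)
    (hW : HasDerivAt W W' ‖x‖) :
    divergence (fun y => (W ‖y‖ / ‖y‖) • y) x
      = W' + (Module.finrank ℝ E - 1) * (W ‖x‖ / ‖x‖) := by
  have hr : ‖x‖ ≠ 0 := norm_ne_zero_iff.mpr hx
  have hquot := (hW.fun_div (hasDerivAt_id' ‖x‖) hr).comp_hasFDerivAt x (hasFDerivAt_norm hx)
  refine (divergence_smul_self hquot).trans ?_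
  simp only [smul_apply, innerSL_apply_apply, real_inner_self_eq_norm_sq,
    smul_eq_mul, Function.comp_apply]
  field_simp
  ring

end Radial

section RadialPLaplacian

variable {p t : ℝ} {n : ℕ} {x : EuclideanSpace ℝ (Fin n)} {φ : ℝ → ℝ → ℝ}

theorem pFlux_radial {φ' : ℝ} (hx : x ≠ 0) (hφ : HasDerivAt (φ · t) φ' ‖x‖) :
    pFlux p (fun y s => φ ‖y‖ s) x t = (|φ'| ^ (p - 2) * φ' / ‖x‖) • x := by
  have hr : ‖x‖ ≠ 0 := norm_ne_zero_iff.mpr hx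
  have hnorm : ‖(φ' / ‖x‖) • x‖ = |φ'| := by
    rw [norm_smul, norm_div, norm_norm, div_mul_cancel₀ _ hr, Real.norm_eq_abs]
  rw [pFlux, spatialGrad, (hasGradientAt_radial hx hφ).gradient, hnorm, smul_smul, mul_div_assoc]

theorem pLaplacian_radial {φ' : ℝ → ℝ} {W' : ℝ} (hx : x ≠ 0)
    (hφ : ∀ᶠ r in 𝓝 ‖x‖, HasDerivAt (φ · t) (φ' r) r)
    (hW : HasDerivAt (fun r => |φ' r| ^ (p - 2) * φ' r) W' ‖x‖) :
    pLaplacian p (fun y s => φ ‖y‖ s) x t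
      = W' + (n - 1) * (|φ' ‖x‖| ^ (p - 2) * φ' ‖x‖ / ‖x‖) := by
  have hflux : (fun y => pFlux p (fun y s => φ ‖y‖ s) y t)
      =ᶠ[𝓝 x] fun y => (|φ' ‖y‖| ^ (p - 2) * φ' ‖y‖ / ‖y‖) • y := by
    filter_upwards [continuous_norm.continuousAt.eventually hφ, eventually_ne_nhds hx]
      with y hy hy0 using pFlux_radial hy0 hy
  have hdiv := divergence_radial hx hW
  rw [finrank_euclideanSpace_fin, divergence] at hdiv
  rw [pLaplacian, hflux.fderiv_eq, hdiv]

end RadialPLaplacian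

/-- The base of the power defining `gbar`, before truncation at `0`; `gbar` is differentiable
where it is positive. -/
noncomputable def gbarBase (p r t : ℝ) : ℝ :=
  1 - (p - 2) / p ^ (p / (p - 1)) * ((r ^ (p / (p - 1)) - 1) / t ^ (1 / (p - 1)))

section Profile

variable {p r t : ℝ}

theorem rpow_div_sub_one {a : ℝ} (hp1 : p ≠ 1) (ha : 0 < a) :
    a ^ (p / (p - 1)) = a * a ^ (1 / (p - 1)) := by
  have hp1' : p - 1 ≠ 0 := sub_ne_zero.mpr hp1
  have hexp : p / (p - 1) = 1 + 1 / (p - 1) := by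
    field_simp
    ring
  rw [hexp, Real.rpow_add ha, Real.rpow_one]

theorem rpow_sub_two_div_mul_rpow {a : ℝ} (hp1 : p ≠ 1) (ha : 0 < a) :
    a ^ ((p - 2) / (p - 1)) * a ^ (1 / (p - 1)) = a := by
  have hp1' : p - 1 ≠ 0 := sub_ne_zero.mpr hp1
  have hexp : (p - 2) / (p - 1) + 1 / (p - 1) = 1 := by
    field_simp
    ring
  rw [← Real.rpow_add ha, hexp, Real.rpow_one]

theorem abs_rpow_mul_neg_rpow {a : ℝ} (hp1 : p ≠ 1) (ha : 0 < a) :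
    |-a ^ (1 / (p - 1))| ^ (p - 2) * -a ^ (1 / (p - 1)) = -a := by
  have hroot : 0 < a ^ (1 / (p - 1)) := Real.rpow_pos_of_pos ha _
  rw [abs_neg, abs_of_pos hroot, mul_neg, ← Real.rpow_add_one hroot.ne', ← Real.rpow_mul ha.le,
    show p - 2 + 1 = p - 1 by ring, one_div_mul_cancel (sub_ne_zero.mpr hp1), Real.rpow_one]

theorem gbar_eq_gbarBase_rpow (hpos : 0 < gbarBase p r t) :
    gbar p r t = gbarBase p r t ^ ((p - 1) / (p - 2)) :=
  congrArg (· ^ ((p - 1) / (p - 2))) (max_eq_right hpos.le)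

theorem gbar_pos (hpos : 0 < gbarBase p r t) : 0 < gbar p r t :=
  gbar_eq_gbarBase_rpow hpos ▸ Real.rpow_pos_of_pos hpos _

theorem hasDerivAt_gbar_of_gbarBase {ρ τ : ℝ → ℝ} {F' s : ℝ} (hp1 : p ≠ 1) (hp2 : p ≠ 2)
    (hF : HasDerivAt (fun s => gbarBase p (ρ s) (τ s)) F' s) (hpos : 0 < gbarBase p (ρ s) (τ s)) :
    HasDerivAt (fun s => gbar p (ρ s) (τ s))
      ((p - 1) / (p - 2) * F' * gbar p (ρ s) (τ s) ^ (1 / (p - 1))) s := by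
  have hp1' : p - 1 ≠ 0 := sub_ne_zero.mpr hp1
  have hp2' : p - 2 ≠ 0 := sub_ne_zero.mpr hp2
  have hgbar : (fun s => gbar p (ρ s) (τ s))
      =ᶠ[𝓝 s] fun s => gbarBase p (ρ s) (τ s) ^ ((p - 1) / (p - 2)) := by
    filter_upwards [hF.continuousAt.eventually (lt_mem_nhds hpos)] with s hs
      using gbar_eq_gbarBase_rpow hs
  refine ((hF.rpow_const (Or.inl hpos.ne')).congr_of_eventuallyEq hgbar).congr_deriv ?_
  have hexp : (p - 1) / (p - 2) - 1 = (p - 1) / (p - 2) * (1 / (p - 1)) := by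
    field_simp
    ring
  rw [gbar_eq_gbarBase_rpow hpos, ← Real.rpow_mul hpos.le, hexp]
  ring

theorem hasDerivAt_gbarBase_time (hp0 : 0 < p) (hp1 : p ≠ 1) (ht : 0 < t) :
    HasDerivAt (fun s => gbarBase p r s)
      ((p - 2) / (p - 1) * (p ^ (-(p / (p - 1))) * ((r ^ (p / (p - 1)) - 1) / t ^ (p / (p - 1)))))
      t := by
  have hp1' : p - 1 ≠ 0 := sub_ne_zero.mpr hp1
  have hroot : t ^ (1 / (p - 1)) ≠ 0 := (Real.rpow_pos_of_pos ht _).ne'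
  have hpow : HasDerivAt (fun s : ℝ => s ^ (1 / (p - 1)))
      (1 / (p - 1) * t ^ (1 / (p - 1) - 1)) t :=
    Real.hasDerivAt_rpow_const (Or.inl ht.ne')
  refine ((((hasDerivAt_const t (r ^ (p / (p - 1)) - 1)).fun_div hpow hroot).const_mul
    ((p - 2) / p ^ (p / (p - 1)))).const_sub 1).congr_deriv ?_
  rw [Real.rpow_sub_one ht.ne', Real.rpow_neg hp0.le, rpow_div_sub_one hp1 ht]
  field_simp
  ring

theorem hasDerivAt_gbarBase_radius (hp0 : 0 < p) (hp1 : p ≠ 1) (hr : 0 < r) (ht : 0 < t) :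
    HasDerivAt (fun s => gbarBase p s t)
      (-((p - 2) / (p - 1) * (r / (p * t)) ^ (1 / (p - 1)))) r := by
  have hp1' : p - 1 ≠ 0 := sub_ne_zero.mpr hp1
  have hpow : HasDerivAt (fun s : ℝ => s ^ (p / (p - 1)))
      (p / (p - 1) * r ^ (p / (p - 1) - 1)) r :=
    Real.hasDerivAt_rpow_const (Or.inl hr.ne')
  refine ((((hpow.sub_const 1).div_const (t ^ (1 / (p - 1)))).const_mul
    ((p - 2) / p ^ (p / (p - 1)))).const_sub 1).congr_deriv ?_
  rw [Real.rpow_sub_one hr.ne', rpow_div_sub_one hp1 hr, rpow_div_sub_one hp1 hp0,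
    Real.div_rpow hr.le (by positivity), Real.mul_rpow hp0.le ht.le]
  field_simp

theorem hasDerivAt_gbar_time (hp0 : 0 < p) (hp1 : p ≠ 1) (hp2 : p ≠ 2) (ht : 0 < t)
    (hpos : 0 < gbarBase p r t) :
    HasDerivAt (fun s => gbar p r s)
      (p ^ (-(p / (p - 1))) * ((r ^ (p / (p - 1)) - 1) / t ^ (p / (p - 1)))
        * gbar p r t ^ (1 / (p - 1))) t := by
  have hp1' : p - 1 ≠ 0 := sub_ne_zero.mpr hp1
  have hp2' : p - 2 ≠ 0 := sub_ne_zero.mpr hp2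
  refine (hasDerivAt_gbar_of_gbarBase (ρ := fun _ => r) (τ := id) hp1 hp2
    (hasDerivAt_gbarBase_time hp0 hp1 ht) hpos).congr_deriv ?_
  simp only [id]
  field_simp

theorem hasDerivAt_gbar_radius (hp0 : 0 < p) (hp1 : p ≠ 1) (hp2 : p ≠ 2) (hr : 0 < r)
    (ht : 0 < t) (hpos : 0 < gbarBase p r t) :
    HasDerivAt (fun s => gbar p s t) (-(r * gbar p r t / (p * t)) ^ (1 / (p - 1))) r := by
  have hp1' : p - 1 ≠ 0 := sub_ne_zero.mpr hp1
  have hp2' : p - 2 ≠ 0 := sub_ne_zero.mpr hp2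
  refine (hasDerivAt_gbar_of_gbarBase (ρ := id) (τ := fun _ => t) hp1 hp2
    (hasDerivAt_gbarBase_radius hp0 hp1 hr ht) hpos).congr_deriv ?_
  rw [mul_div_right_comm, Real.mul_rpow (by positivity) (gbar_pos hpos).le]
  simp only [id]
  field_simp

end Profile

theorem pLaplacian_gbar {p t : ℝ} {n : ℕ} {x : EuclideanSpace ℝ (Fin n)} (hp0 : 0 < p)
    (hp1 : p ≠ 1) (hp2 : p ≠ 2) (hx : x ≠ 0) (ht : 0 < t) (hpos : 0 < gbarBase p ‖x‖ t) :
    pLaplacian p (fun y s => gbar p ‖y‖ s) x t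
      = (‖x‖ * (‖x‖ * gbar p ‖x‖ t / (p * t)) ^ (1 / (p - 1)) - n * gbar p ‖x‖ t) / (p * t) := by
  have hr : 0 < ‖x‖ := norm_pos_iff.mpr hx
  have hregion : ∀ᶠ r in 𝓝 ‖x‖, 0 < r ∧ 0 < gbarBase p r t :=
    (lt_mem_nhds hr).and <| (hasDerivAt_gbarBase_radius hp0 hp1 hr ht).continuousAt.eventually
      (lt_mem_nhds hpos)
  have hderiv : ∀ᶠ r in 𝓝 ‖x‖,
      HasDerivAt (gbar p · t) (-(r * gbar p r t / (p * t)) ^ (1 / (p - 1))) r :=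
    hregion.mono fun r h => hasDerivAt_gbar_radius hp0 hp1 hp2 h.1 ht h.2
  have hflux {r : ℝ} (h : 0 < r ∧ 0 < gbarBase p r t) :
      |-(r * gbar p r t / (p * t)) ^ (1 / (p - 1))| ^ (p - 2)
        * -(r * gbar p r t / (p * t)) ^ (1 / (p - 1)) = -(r * gbar p r t / (p * t)) :=
    abs_rpow_mul_neg_rpow hp1 (div_pos (mul_pos h.1 (gbar_pos h.2)) (mul_pos hp0 ht))
  have hfluxDeriv := ((((hasDerivAt_id' ‖x‖).fun_mul hderiv.self_of_nhds).div_const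
    (p * t)).fun_neg).congr_of_eventuallyEq (hregion.mono fun r h => hflux h)
  rw [pLaplacian_radial hx hderiv hfluxDeriv, hflux ⟨hr, hpos⟩]
  field_simp
  ring

theorem stmt7_general (p : ℝ) (hp0 : 0 < p) (hp1 : p ≠ 1) (hp2 : p ≠ 2) (n : ℕ)
    (x : EuclideanSpace ℝ (Fin n)) (t : ℝ) (hx : x ≠ 0) (ht : 0 < t)
    (hpos : 0 < 1 - (p - 2) / p ^ (p / (p - 1)) * ((‖x‖ ^ (p / (p - 1)) - 1) / t ^ (1 / (p - 1)))) :
    HasDerivAt (fun s => gbar p ‖x‖ s)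
        (p ^ (-(p / (p - 1))) * ((‖x‖ ^ (p / (p - 1)) - 1) / t ^ (p / (p - 1)))
            * gbar p ‖x‖ t ^ ((1:ℝ) / (p - 1))) t ∧
    pLaplacian p (fun y s => gbar p ‖y‖ s) x t
        = (p ^ (-(p / (p - 1))) * ‖x‖ ^ (p / (p - 1)) / t ^ (p / (p - 1))
            - (n : ℝ) / (p * t) * gbar p ‖x‖ t ^ ((p - 2) / (p - 1)))
            * gbar p ‖x‖ t ^ ((1:ℝ) / (p - 1)) := by
  refine ⟨hasDerivAt_gbar_time hp0 hp1 hp2 ht hpos, ?_⟩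
  have hr : 0 < ‖x‖ := norm_pos_iff.mpr hx
  have hg : 0 < gbar p ‖x‖ t := gbar_pos hpos
  have hroot : (‖x‖ * gbar p ‖x‖ t / (p * t)) ^ (1 / (p - 1))
      = ‖x‖ ^ (1 / (p - 1)) * gbar p ‖x‖ t ^ (1 / (p - 1))
        / (p ^ (1 / (p - 1)) * t ^ (1 / (p - 1))) := by
    rw [Real.div_rpow (by positivity) (by positivity), Real.mul_rpow hr.le hg.le,
      Real.mul_rpow hp0.le ht.le]
  rw [pLaplacian_gbar hp0 hp1 hp2 hx ht hpos, hroot, sub_mul, mul_assoc (n / (p * t) : ℝ),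
    rpow_sub_two_div_mul_rpow hp1 hg, Real.rpow_neg hp0.le, rpow_div_sub_one hp1 hp0,
    rpow_div_sub_one hp1 hr, rpow_div_sub_one hp1 ht]
  field_simp

/-- explicit formulas for `∂ₜG` and `Δ_p G` for `G(x,t) = g(|x|,t)`. -/
theorem stmt7 (p : ℝ) (hp : 2 < p) (n : ℕ) (x : EuclideanSpace ℝ (Fin n)) (t : ℝ)
    (hx : x ≠ 0) (ht : 0 < t)
    (hpos : 0 < 1 - (p - 2) / p ^ (p / (p - 1)) * ((‖x‖ ^ (p / (p - 1)) - 1) / t ^ (1 / (p - 1)))) :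
    deriv (fun s => gbar p ‖x‖ s) t
        = p ^ (-(p / (p - 1))) * ((‖x‖ ^ (p / (p - 1)) - 1) / t ^ (p / (p - 1)))
            * gbar p ‖x‖ t ^ ((1:ℝ) / (p - 1)) ∧
    pLaplacian p (fun y s => gbar p ‖y‖ s) x t
        = (p ^ (-(p / (p - 1))) * ‖x‖ ^ (p / (p - 1)) / t ^ (p / (p - 1))
            - (n : ℝ) / (p * t) * gbar p ‖x‖ t ^ ((p - 2) / (p - 1)))
            * gbar p ‖x‖ t ^ ((1:ℝ) / (p - 1)) := by
  obtain ⟨htime, hspace⟩ :=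
    stmt7_general p (by linarith) (by linarith) hp.ne' n x t hx ht hpos
  exact ⟨htime.deriv, hspace⟩
end
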